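/- The function W^2(r) = ((r^4-α^4)^{n+1} - (1-α^4)^{n+1})/(r^4(r^4-α^4)^n) is strictly increasing in r on (1,∞) for 0 ≤ α < 1 and n ∈ ℕ, and satisfies 0 < W^2(r) < 1 there. -/

import Mathlib

/-- For `0 ≤ α < 1` and `n ∈ ℕ`, the function
`W²(r) = ((r⁴-α⁴)^(n+1) - (1-α⁴)^(n+1))/(r⁴(r⁴-α⁴)ⁿ)` is strictly increasing in `r`
on `(1,∞)` and satisfies `0 < W²(r) < 1` there. -/
theorem stmt_9 (n : ℕ) (α : ℝ) (hα0 : 0 ≤ α) (hα1 : α < 1) :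
    StrictMonoOn
      (fun r : ℝ => ((r ^ 4 - α ^ 4) ^ (n + 1) - (1 - α ^ 4) ^ (n + 1)) /
        (r ^ 4 * (r ^ 4 - α ^ 4) ^ n)) (Set.Ioi 1) ∧
    ∀ r : ℝ, 1 < r →
      0 < ((r ^ 4 - α ^ 4) ^ (n + 1) - (1 - α ^ 4) ^ (n + 1)) /
          (r ^ 4 * (r ^ 4 - α ^ 4) ^ n) ∧
      ((r ^ 4 - α ^ 4) ^ (n + 1) - (1 - α ^ 4) ^ (n + 1)) /
          (r ^ 4 * (r ^ 4 - α ^ 4) ^ n) < 1 := by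
  have ha0 : 0 ≤ α ^ 4 := by positivity
  have ha1 : α ^ 4 < 1 := pow_lt_one₀ hα0 hα1 (by norm_num)
  generalize α ^ 4 = a at ha0 ha1
  have hc : 0 < 1 - a := by linarith
  have hr : ∀ r : ℝ, 1 < r → 1 < r ^ 4 := fun r h => one_lt_pow₀ h (by norm_num)
  have key : ∀ y : ℝ, 1 < y → ((y - a) ^ (n + 1) - (1 - a) ^ (n + 1)) / (y * (y - a) ^ n)
      = ((y - a) / y) * (1 - ((1 - a) / (y - a)) ^ (n + 1)) := by
    intro y hy
    have h1 : y - a ≠ 0 := by linarith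
    have h2 : y ≠ 0 := by linarith
    rw [div_pow]
    field_simp
    rw [pow_succ (y - a) n]
    ring
  have hq : ∀ y : ℝ, 1 < y → ((1 - a) / (y - a)) ^ (n + 1) < 1 := by
    intro y hy
    have h1 : 0 < y - a := by linarith
    refine pow_lt_one₀ (by positivity) ?_ (by omega)
    rw [div_lt_one h1]
    linarith
  refine ⟨?_, ?_⟩
  · intro r h s h' hrs
    have hr1 : 1 < r := h
    have hx := hr r h
    have hy := hr s h'
    have hxy : r ^ 4 < s ^ 4 := pow_lt_pow_left₀ hrs (by linarith) (by norm_num)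
    simp only
    rw [key _ hx, key _ hy]
    generalize r ^ 4 = x at *
    generalize s ^ 4 = y at *
    have hxa : 0 < x - a := by linarith
    have hya : 0 < y - a := by linarith
    have hx0 : 0 < x := by linarith
    have hy0 : 0 < y := by linarith
    have h1 : (x - a) / x ≤ (y - a) / y := by
      rw [div_le_div_iff₀ hx0 hy0]
      nlinarith
    have h2 : ((1 - a) / (y - a)) ^ (n + 1) < ((1 - a) / (x - a)) ^ (n + 1) := by
      refine pow_lt_pow_left₀ ?_ (by positivity) (by omega)
      exact div_lt_div_of_pos_left hc hxa (by linarith)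
    have h3 := hq x hx
    exact mul_lt_mul_of_le_of_lt_of_pos_of_nonneg h1 (by linarith) (by positivity) (by linarith)
  · intro r h
    have hx := hr r h
    rw [key _ hx]
    generalize r ^ 4 = x at *
    have hxa : 0 < x - a := by linarith
    have hx0 : 0 < x := by linarith
    have h3 := hq x hx
    have h4 : 0 < ((1 - a) / (x - a)) ^ (n + 1) := by positivity
    have h5 : 0 < (x - a) / x := by positivity
    have h6 : (x - a) / x ≤ 1 := by
      rw [div_le_one hx0]
      linarith
    exact ⟨mul_pos h5 (by linarith), by nlinarith⟩
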